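/- arXiv:1102.5165 — 3 statements merged into one kernel-verified Lean document; each statement's English description precedes it below -/
import Mathlib

section
/- For every field F and every polynomial P ∈ F[u,v], both of the polynomials P(v,u)P(u,w)(v−w) + P(u,w)P(v,w)(u−v) − P(u,v)P(v,w)(u−w) and −P(u,v)P(u,w)(v−w) − P(u,w)P(w,v)(u−v) + P(u,v)P(v,w)(u−w) in F[u,v,w] are divisible by (u−v)(u−w)(v−w); equivalently, the rational functions P'(u,v,w) and P''(u,v,w) are polynomials in F[u,v,w]. -/
/-!
STATEMENT 14: For every field `F` and every polynomial `P ∈ F[u,v]`, both of the polynomials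
`P(v,u)P(u,w)(v−w) + P(u,w)P(v,w)(u−v) − P(u,v)P(v,w)(u−w)` and
`−P(u,v)P(u,w)(v−w) − P(u,w)P(w,v)(u−v) + P(u,v)P(v,w)(u−w)` in `F[u,v,w]` are divisible by
`(u−v)(u−w)(v−w)`; equivalently, the rational functions `P'(u,v,w)` and `P''(u,v,w)` are
polynomials.

We realize `F[u,v]` as `MvPolynomial (Fin 2) F` (with `u = X 0`, `v = X 1`) and `F[u,v,w]` as
`MvPolynomial (Fin 3) F` (with `u = X 0`, `v = X 1`, `w = X 2`).  For a polynomial `P` in two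
variables, the evaluation `P(x,y)` with `x, y` among `u, v, w` is `rename ![ix, iy] P`.
-/

open MvPolynomial

/-- A polynomial killed by the substitution `X i ↦ X j` is divisible by `X i - X j`. -/
theorem X_sub_X_dvd_of_rename_eq_zero {σ R : Type*} [DecidableEq σ] [CommRing R] (i j : σ)
    {p : MvPolynomial σ R} (hp : rename (Function.update id i j) p = 0) :
    (X i - X j : MvPolynomial σ R) ∣ p := by
  let I : Ideal (MvPolynomial σ R) := Ideal.span {X i - X j}
  have hmk : (Ideal.Quotient.mkₐ R I).comp (rename (Function.update id i j)) =
      Ideal.Quotient.mkₐ R I := by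
    ext k
    rcases eq_or_ne k i with rfl | hk
    · simpa using (Ideal.Quotient.eq.mpr
        (Ideal.mem_span_singleton_self (X k - X j : MvPolynomial σ R))).symm
    · simp [Function.update_of_ne hk]
  rw [← Ideal.mem_span_singleton, ← Ideal.Quotient.eq_zero_iff_mem]
  have h := DFunLike.congr_fun hmk p
  simpa [hp] using h.symm

/-- A polynomial in three variables that vanishes whenever two of them coincide is divisible by
the Vandermonde product. -/
theorem vandermonde_dvd_of_rename_eq_zero {R : Type*} [CommRing R] [IsDomain R]
    {p : MvPolynomial (Fin 3) R}
    (h01 : rename (Function.update id (0 : Fin 3) 1) p = 0)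
    (h02 : rename (Function.update id (0 : Fin 3) 2) p = 0)
    (h12 : rename (Function.update id (1 : Fin 3) 2) p = 0) :
    (X 0 - X 1) * (X 0 - X 2) * (X 1 - X 2) ∣ p := by
  have hX {i j : Fin 3} (hij : i ≠ j) : (X i - X j : MvPolynomial (Fin 3) R) ≠ 0 :=
    sub_ne_zero.mpr fun h => hij (X_injective h)
  obtain ⟨q, rfl⟩ := X_sub_X_dvd_of_rename_eq_zero 0 1 h01
  have hq : rename (Function.update id (0 : Fin 3) 2) q = 0 := by
    simpa [Function.update, hX] using h02
  obtain ⟨r, rfl⟩ := X_sub_X_dvd_of_rename_eq_zero 0 2 hq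
  have hr : rename (Function.update id (1 : Fin 3) 2) r = 0 := by
    simpa [Function.update, hX] using h12
  obtain ⟨s, rfl⟩ := X_sub_X_dvd_of_rename_eq_zero 1 2 hr
  exact ⟨s, by ring⟩

theorem stmt_14 (F : Type) [Field F] (P : MvPolynomial (Fin 2) F) :
    ((X 0 - X 1) * (X 0 - X 2) * (X 1 - X 2) ∣
      (rename (![1, 0] : Fin 2 → Fin 3) P * rename (![0, 2] : Fin 2 → Fin 3) P * (X 1 - X 2)
        + rename (![0, 2] : Fin 2 → Fin 3) P * rename (![1, 2] : Fin 2 → Fin 3) P * (X 0 - X 1)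
        - rename (![0, 1] : Fin 2 → Fin 3) P * rename (![1, 2] : Fin 2 → Fin 3) P * (X 0 - X 2)))
    ∧ ((X 0 - X 1) * (X 0 - X 2) * (X 1 - X 2) ∣
      (- (rename (![0, 1] : Fin 2 → Fin 3) P * rename (![0, 2] : Fin 2 → Fin 3) P * (X 1 - X 2))
        - rename (![0, 2] : Fin 2 → Fin 3) P * rename (![2, 1] : Fin 2 → Fin 3) P * (X 0 - X 1)
        + rename (![0, 1] : Fin 2 → Fin 3) P * rename (![1, 2] : Fin 2 → Fin 3) P * (X 0 - X 2))) := by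
  have hcomp (f : Fin 3 → Fin 3) (a b : Fin 3) : f ∘ ![a, b] = ![f a, f b] := by
    ext k
    fin_cases k <;> rfl
  constructor <;> apply vandermonde_dvd_of_rename_eq_zero <;>
    simp [rename_rename, hcomp, Function.update] <;> ring
end

section
/- For every polynomial P ∈ F[u,v] and every 1 ≤ t ≤ m−2, the identity τ_{t+1}(τ_t(τ_{t+1}(f))) − τ_t(τ_{t+1}(τ_t(f))) = P'(x_t,x_{t+1},x_{t+2})·τ_t(f) + P''(x_t,x_{t+1},x_{t+2})·τ_{t+1}(f) holds for all f ∈ F[x_1,…,x_m], where P'(x_t,x_{t+1},x_{t+2}) and P''(x_t,x_{t+1},x_{t+2}) denote the evaluations at (x_t,x_{t+1},x_{t+2}) of the polynomials P' and P'' (these are polynomials because their numerators are divisible by (u−v)(u−w)(v−w)). -/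
/-!
Common setup: Let `F` be a field and `m` a positive integer.  The symmetric group `S_m` acts on
`F[x_1,…,x_m] = MvPolynomial (Fin m) F` by permuting the variables; `r_t` is the action of the
transposition `(t, t+1)`, and the divided difference operator `∂_t` is characterized by
`∂_t f * (x_t − x_{t+1}) = r_t f − f` (this determines `∂_t` uniquely, since `MvPolynomial` over a
field is an integral domain and `x_t − x_{t+1} ≠ 0`).  Positions are indexed by `t : Fin (m-1)`,
with `castL t`, `castR t : Fin m` the `t`-th and `(t+1)`-st positions.
-/

open MvPolynomial

namespace DD

/-- The `t`-th position. -/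
def castL {m : ℕ} (t : Fin (m - 1)) : Fin m := ⟨t.1, by have := t.isLt; omega⟩

/-- The `(t+1)`-st position. -/
def castR {m : ℕ} (t : Fin (m - 1)) : Fin m := ⟨t.1 + 1, by have := t.isLt; omega⟩

/-- The transposition `r_t = (t, t+1)` as a permutation of `Fin m`. -/
def swapAt {m : ℕ} (t : Fin (m - 1)) : Equiv.Perm (Fin m) := Equiv.swap (castL t) (castR t)

/-- `IsDividedDiff dd` says that `dd t` is the divided difference operator
`∂_t f = (r_t f − f)/(x_t − x_{t+1})`, expressed by the defining identity
`∂_t f * (x_t − x_{t+1}) = r_t f − f`. -/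
def IsDividedDiff {F : Type} [Field F] {m : ℕ}
    (dd : (t : Fin (m - 1)) → MvPolynomial (Fin m) F → MvPolynomial (Fin m) F) : Prop :=
  ∀ (t : Fin (m - 1)) (f : MvPolynomial (Fin m) F),
    dd t f * (X (castL t) - X (castR t)) = rename (swapAt t) f - f

/-- `P(x_t, x_{t+1})` as an element of `F[x_1,…,x_m]`, for a two-variable polynomial `P`. -/
noncomputable def Pat {F : Type} [Field F] {m : ℕ} (P : MvPolynomial (Fin 2) F)
    (t : Fin (m - 1)) : MvPolynomial (Fin m) F :=
  aeval ![X (castL t), X (castR t)] P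

/-- The operator `τ_t f = P(x_t,x_{t+1}) · ∂_t f`. -/
noncomputable def tauOp {F : Type} [Field F] {m : ℕ} (P : MvPolynomial (Fin 2) F)
    (dd : (t : Fin (m - 1)) → MvPolynomial (Fin m) F → MvPolynomial (Fin m) F)
    (t : Fin (m - 1)) (f : MvPolynomial (Fin m) F) : MvPolynomial (Fin m) F :=
  Pat P t * dd t f

end DD

/-- The deformed braid relation for divided differences `D₁`, `D₂` attached to endomorphisms
`s₁`, `s₂` of an integral domain that act like the transpositions `(u v)` and `(v w)`.  Here
`a`, `b`, `c`, `a'`, `b'` play the roles of `P(u,v)`, `P(v,w)`, `P(u,w)`, `P(v,u)`, `P(w,v)`. -/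
theorem DD.braid_of_dividedDiff {R : Type*} [CommRing R] [IsDomain R] (s₁ s₂ : R →+* R)
    (D₁ D₂ : R → R) {u v w a b c a' b' Q₁ Q₂ : R} (huv : u ≠ v) (huw : u ≠ w) (hvw : v ≠ w)
    (hD₁ : ∀ g, D₁ g * (u - v) = s₁ g - g) (hD₂ : ∀ g, D₂ g * (v - w) = s₂ g - g)
    (h₁₁ : ∀ g, s₁ (s₁ g) = g) (h₂₂ : ∀ g, s₂ (s₂ g) = g)
    (hbraid : ∀ g, s₁ (s₂ (s₁ g)) = s₂ (s₁ (s₂ g)))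
    (h₁u : s₁ u = v) (h₁w : s₁ w = w) (h₂u : s₂ u = u) (h₂v : s₂ v = w)
    (h₁a : s₁ a = a') (h₁b : s₁ b = c) (h₂a : s₂ a = c) (h₂b : s₂ b = b')
    (hQ₁ : Q₁ * ((u - v) * (u - w) * (v - w)) =
      a' * c * (v - w) + c * b * (u - v) - a * b * (u - w))
    (hQ₂ : Q₂ * ((u - v) * (u - w) * (v - w)) =
      -(a * c * (v - w)) - c * b' * (u - v) + a * b * (u - w)) (f : R) :
    b * D₂ (a * D₁ (b * D₂ f)) - a * D₁ (b * D₂ (a * D₁ f)) =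
      Q₁ * (a * D₁ f) + Q₂ * (b * D₂ f) := by
  have h₁v : s₁ v = u := by rw [← h₁u, h₁₁]
  have h₂w : s₂ w = v := by rw [← h₂v, h₂₂]
  have h₁c : s₁ c = b := by rw [← h₁b, h₁₁]
  have h₂c : s₂ c = a := by rw [← h₂a, h₂₂]
  let φ := algebraMap R (FractionRing R)
  have hφ : Function.Injective φ := IsFractionRing.injective R (FractionRing R)
  have nuv : φ u - φ v ≠ 0 := sub_ne_zero.2 (hφ.ne huv)
  have nuw : φ u - φ w ≠ 0 := sub_ne_zero.2 (hφ.ne huw)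
  have nvw : φ v - φ w ≠ 0 := sub_ne_zero.2 (hφ.ne hvw)
  have nvu : φ v - φ u ≠ 0 := sub_ne_zero.2 (hφ.ne huv.symm)
  have nwv : φ w - φ v ≠ 0 := sub_ne_zero.2 (hφ.ne hvw.symm)
  have key₁ (σ : R →+* FractionRing R) (g : R) (hσ : σ u - σ v ≠ 0) :
      σ (D₁ g) = (σ (s₁ g) - σ g) / (σ u - σ v) := by
    rw [eq_div_iff hσ, ← map_sub, ← map_sub, ← map_mul, hD₁]
  have key₂ (σ : R →+* FractionRing R) (g : R) (hσ : σ v - σ w ≠ 0) :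
      σ (D₂ g) = (σ (s₂ g) - σ g) / (σ v - σ w) := by
    rw [eq_div_iff hσ, ← map_sub, ← map_sub, ← map_mul, hD₂]
  have e₁ (g : R) : φ (D₁ g) = (φ (s₁ g) - φ g) / (φ u - φ v) := key₁ φ g nuv
  have e₂ (g : R) : φ (D₂ g) = (φ (s₂ g) - φ g) / (φ v - φ w) := key₂ φ g nvw
  have e₁₁ (g : R) : φ (s₁ (D₁ g)) = (φ g - φ (s₁ g)) / (φ v - φ u) := by
    simpa [h₁u, h₁v, h₁₁, nvu] using key₁ (φ.comp s₁) g
  have e₂₂ (g : R) : φ (s₂ (D₂ g)) = (φ g - φ (s₂ g)) / (φ w - φ v) := by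
    simpa [h₂v, h₂w, h₂₂, nwv] using key₂ (φ.comp s₂) g
  have e₁₂ (g : R) : φ (s₁ (D₂ g)) = (φ (s₁ (s₂ g)) - φ (s₁ g)) / (φ u - φ w) := by
    simpa [h₁v, h₁w, nuw] using key₂ (φ.comp s₁) g
  have e₂₁ (g : R) : φ (s₂ (D₁ g)) = (φ (s₂ (s₁ g)) - φ (s₂ g)) / (φ u - φ w) := by
    simpa [h₂u, h₂v, nuw] using key₁ (φ.comp s₂) g
  have e₁₂₁ (g : R) :
      φ (s₁ (s₂ (D₁ g))) = (φ (s₂ (s₁ (s₂ g))) - φ (s₁ (s₂ g))) / (φ v - φ w) := by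
    simpa [h₂u, h₂v, h₁u, h₁w, hbraid, nvw] using key₁ ((φ.comp s₁).comp s₂) g
  have e₂₁₂ (g : R) :
      φ (s₂ (s₁ (D₂ g))) = (φ (s₂ (s₁ (s₂ g))) - φ (s₂ (s₁ g))) / (φ u - φ v) := by
    simpa [h₁v, h₁w, h₂u, h₂w, nuv] using key₂ ((φ.comp s₂).comp s₁) g
  have q₁ : φ Q₁ = (φ a' * φ c * (φ v - φ w) + φ c * φ b * (φ u - φ v)
      - φ a * φ b * (φ u - φ w)) / ((φ u - φ v) * (φ u - φ w) * (φ v - φ w)) := by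
    rw [eq_div_iff (by positivity)]
    simpa using congrArg φ hQ₁
  have q₂ : φ Q₂ = (-(φ a * φ c * (φ v - φ w)) - φ c * φ b' * (φ u - φ v)
      + φ a * φ b * (φ u - φ w)) / ((φ u - φ v) * (φ u - φ w) * (φ v - φ w)) := by
    rw [eq_div_iff (by positivity)]
    simpa using congrArg φ hQ₂
  apply hφ
  simp only [map_sub, map_add, map_mul, e₁, e₂, e₁₁, e₂₂, e₁₂, e₂₁, e₁₂₁, e₂₁₂, q₁, q₂,
    h₁a, h₁b, h₁c, h₂a, h₂b, h₂c]
  rw [← neg_sub (φ u) (φ v), ← neg_sub (φ v) (φ w)]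
  field_simp
  ring

/-- Renaming the variables of `P(x_i, x_j)` along `σ` gives `P(x_{σ i}, x_{σ j})`. -/
theorem DD.rename_aeval_pair {F ι κ : Type*} [CommSemiring F] (σ : ι → κ) (i j : ι)
    (P : MvPolynomial (Fin 2) F) :
    rename σ (aeval ![X i, X j] P : MvPolynomial ι F) = aeval ![X (σ i), X (σ j)] P := by
  rw [← AlgHom.comp_apply, comp_aeval]
  congr 2
  funext k
  fin_cases k <;> simp

open DD in
/-- the braid relation.  For every `P ∈ F[u,v]` and `1 ≤ t ≤ m−2` (with
`t' = t+1`), `τ_{t'}(τ_t(τ_{t'} f)) − τ_t(τ_{t'}(τ_t f))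
  = P'(x_t,x_{t+1},x_{t+2})·τ_t(f) + P''(x_t,x_{t+1},x_{t+2})·τ_{t'}(f)`,
where `P', P'' ∈ F[u,v,w]` are the polynomials determined (uniquely, as `F[u,v,w]` is an
integral domain) by the identities
`P' ·(u−v)(u−w)(v−w) = P(v,u)P(u,w)(v−w) + P(u,w)P(v,w)(u−v) − P(u,v)P(v,w)(u−w)` and
`P''·(u−v)(u−w)(v−w) = −P(u,v)P(u,w)(v−w) − P(u,w)P(w,v)(u−v) + P(u,v)P(v,w)(u−w)`
(their numerators are divisible by `(u−v)(u−w)(v−w)`). -/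
theorem stmt_17 (F : Type) [Field F] (m : ℕ) (P : MvPolynomial (Fin 2) F)
    (dd : (t : Fin (m - 1)) → MvPolynomial (Fin m) F → MvPolynomial (Fin m) F)
    (hdd : IsDividedDiff dd)
    (P₁ P₂ : MvPolynomial (Fin 3) F)
    (hP₁ : P₁ * ((X 0 - X 1) * (X 0 - X 2) * (X 1 - X 2)) =
        rename (![1, 0] : Fin 2 → Fin 3) P * rename (![0, 2] : Fin 2 → Fin 3) P * (X 1 - X 2)
        + rename (![0, 2] : Fin 2 → Fin 3) P * rename (![1, 2] : Fin 2 → Fin 3) P * (X 0 - X 1)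
        - rename (![0, 1] : Fin 2 → Fin 3) P * rename (![1, 2] : Fin 2 → Fin 3) P * (X 0 - X 2))
    (hP₂ : P₂ * ((X 0 - X 1) * (X 0 - X 2) * (X 1 - X 2)) =
        - (rename (![0, 1] : Fin 2 → Fin 3) P * rename (![0, 2] : Fin 2 → Fin 3) P * (X 1 - X 2))
        - rename (![0, 2] : Fin 2 → Fin 3) P * rename (![2, 1] : Fin 2 → Fin 3) P * (X 0 - X 1)
        + rename (![0, 1] : Fin 2 → Fin 3) P * rename (![1, 2] : Fin 2 → Fin 3) P * (X 0 - X 2))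
    (t : Fin (m - 1)) (h : t.1 + 1 < m - 1) (f : MvPolynomial (Fin m) F) :
    tauOp P dd ⟨t.1 + 1, h⟩ (tauOp P dd t (tauOp P dd ⟨t.1 + 1, h⟩ f))
      - tauOp P dd t (tauOp P dd ⟨t.1 + 1, h⟩ (tauOp P dd t f)) =
    aeval ![X (castL t), X (castR t), X (castR (⟨t.1 + 1, h⟩ : Fin (m - 1)))] P₁ * tauOp P dd t f
      + aeval ![X (castL t), X (castR t), X (castR (⟨t.1 + 1, h⟩ : Fin (m - 1)))] P₂ *
          tauOp P dd ⟨t.1 + 1, h⟩ f := by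
  set i : Fin m := castL t with hi
  set j : Fin m := castR t with hj
  set k : Fin m := castR (⟨t.1 + 1, h⟩ : Fin (m - 1)) with hk
  have hj' : castL (⟨t.1 + 1, h⟩ : Fin (m - 1)) = j := rfl
  have hij : i ≠ j := by simp [hi, hj, castL, castR, Fin.ext_iff]
  have hik : i ≠ k := by
    simp only [hi, hk, castL, castR, ne_eq, Fin.ext_iff]
    omega
  have hjk : j ≠ k := by simp [hj, hk, castR, Fin.ext_iff]
  have hX {p q : Fin m} (hpq : p ≠ q) : (X p : MvPolynomial (Fin m) F) ≠ X q :=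
    (X_injective (R := F)).ne hpq
  have hev (p q : Fin 3) :
      aeval (![X i, X j, X k] : Fin 3 → MvPolynomial (Fin m) F) (rename ![p, q] P) =
        aeval ![(![X i, X j, X k] : Fin 3 → MvPolynomial (Fin m) F) p, ![X i, X j, X k] q] P := by
    rw [aeval_rename]
    congr 2
    funext l
    fin_cases l <;> rfl
  have hinv (p q : Fin m) (g : MvPolynomial (Fin m) F) :
      rename (Equiv.swap p q) (rename (Equiv.swap p q) g) = g := by
    rw [rename_rename, ← Equiv.coe_trans, ← Equiv.Perm.mul_def, Equiv.swap_mul_self,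
      Equiv.Perm.coe_one, rename_id_apply]
  have hbraid : Equiv.swap i j * Equiv.swap j k * Equiv.swap i j =
      Equiv.swap j k * Equiv.swap i j * Equiv.swap j k := by
    rw [Equiv.swap_mul_swap_mul_swap hij hik, Equiv.swap_comm i j, Equiv.swap_comm j k,
      Equiv.swap_mul_swap_mul_swap hjk.symm hik.symm, Equiv.swap_comm]
  refine braid_of_dividedDiff (rename (Equiv.swap i j)).toRingHom
    (rename (Equiv.swap j k)).toRingHom (dd t) (dd ⟨t.1 + 1, h⟩)
    (u := X i) (v := X j) (w := X k) (c := aeval ![X i, X k] P)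
    (a' := aeval ![X j, X i] P) (b' := aeval ![X k, X j] P)
    (hX hij) (hX hik) (hX hjk) (hdd t) (hdd ⟨t.1 + 1, h⟩) (hinv i j) (hinv j k)
    (fun g => ?_) ?_ ?_ ?_ ?_ ?_ ?_ ?_ ?_ ?_ ?_ f
  · simp only [AlgHom.toRingHom_eq_coe, RingHom.coe_coe, rename_rename,
      ← Equiv.Perm.coe_mul, ← mul_assoc, hbraid]
  · simp
  · simp [Equiv.swap_apply_of_ne_of_ne hik.symm hjk.symm]
  · simp [Equiv.swap_apply_of_ne_of_ne hij hik]
  · simp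
  · exact (rename_aeval_pair _ _ _ P).trans (by rw [Equiv.swap_apply_left, Equiv.swap_apply_right])
  · exact (rename_aeval_pair _ _ _ P).trans (by rw [hj', Equiv.swap_apply_right,
      Equiv.swap_apply_of_ne_of_ne hik.symm hjk.symm])
  · exact (rename_aeval_pair _ _ _ P).trans (by rw [Equiv.swap_apply_of_ne_of_ne hij hik,
      Equiv.swap_apply_left])
  · exact (rename_aeval_pair _ _ _ P).trans (by rw [hj', Equiv.swap_apply_left, Equiv.swap_apply_right])
  · have H := congrArg (aeval (![X i, X j, X k] : Fin 3 → MvPolynomial (Fin m) F)) hP₁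
    simp only [map_mul, map_add, map_sub, hev, aeval_X] at H
    exact H
  · have H := congrArg (aeval (![X i, X j, X k] : Fin 3 → MvPolynomial (Fin m) F)) hP₂
    simp only [map_mul, map_add, map_sub, map_neg, hev, aeval_X] at H
    exact H
end

section
/- For each w ∈ S_m fix a reduced expression w = r_{j_1}⋯r_{j_k} and set ∂_w = ∂_{j_1} ∘ ⋯ ∘ ∂_{j_k} (with ∂_e = id for the identity element). Then the family of F-linear endomorphisms {∂_w ∘ μ_{x^𝐭} : w ∈ S_m, 𝐭 ∈ ℤ_{≥0}^m} of F[x_1,…,x_m] is linearly independent over F, where μ_{x^𝐭} denotes multiplication by the monomial x_1^{t_1}⋯x_m^{t_m}. -/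
/-!
Common setup: Let `F` be a field and `m` a positive integer.  The symmetric group `S_m` acts on
`F[x_1,…,x_m] = MvPolynomial (Fin m) F` by permuting the variables; `r_t` is the action of the
transposition `(t, t+1)`, and the divided difference operator `∂_t` is characterized by
`∂_t f * (x_t − x_{t+1}) = r_t f − f` (this determines `∂_t` uniquely, since `MvPolynomial` over a
field is an integral domain and `x_t − x_{t+1} ≠ 0`).  Positions are indexed by `t : Fin (m-1)`,
with `castL t`, `castR t : Fin m` the `t`-th and `(t+1)`-st positions.
-/

open MvPolynomial

namespace DD

/-- The permutation of `Fin m` determined by a word in the adjacent transpositions. -/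
def wordPerm {m : ℕ} (l : List (Fin (m - 1))) : Equiv.Perm (Fin m) := (l.map swapAt).prod

/-- `l` is a reduced expression for `w`: it represents `w` and has minimal length among all
words representing `w`. -/
def IsReducedWord {m : ℕ} (l : List (Fin (m - 1))) (w : Equiv.Perm (Fin m)) : Prop :=
  wordPerm l = w ∧ ∀ l' : List (Fin (m - 1)), wordPerm l' = w → l.length ≤ l'.length

/-- `∂_{j_1} ∘ ⋯ ∘ ∂_{j_k}` for a word `[j_1, …, j_k]` (with `∂` of the empty word the
identity). -/
def ddWord {F : Type} [Field F] {m : ℕ}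
    (dd : (t : Fin (m - 1)) → MvPolynomial (Fin m) F → MvPolynomial (Fin m) F) :
    List (Fin (m - 1)) → MvPolynomial (Fin m) F → MvPolynomial (Fin m) F
  | [], f => f
  | t :: l, f => dd t (ddWord dd l f)

end DD

namespace DD

lemma wordPerm_cons {m : ℕ} (t : Fin (m - 1)) (l : List (Fin (m - 1))) :
    wordPerm (t :: l) = swapAt t * wordPerm l := by
  simp [wordPerm]

lemma swapAt_mul_swapAt_mul {m : ℕ} (t : Fin (m - 1)) (v : Equiv.Perm (Fin m)) :
    swapAt t * (swapAt t * v) = v := by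
  simp [swapAt, ← mul_assoc]

lemma X_castL_sub_X_castR_ne_zero (F : Type) [Field F] {m : ℕ} (t : Fin (m - 1)) :
    (X (castL t) - X (castR t) : MvPolynomial (Fin m) F) ≠ 0 := by
  rw [sub_ne_zero]
  intro h
  have := congrArg Fin.val (X_injective h)
  simp [castL, castR] at this

/-- The tail of a reduced word is reduced. -/
lemma IsReducedWord.tail {m : ℕ} {t : Fin (m - 1)} {l : List (Fin (m - 1))}
    (h : IsReducedWord (t :: l) (wordPerm (t :: l))) : IsReducedWord l (wordPerm l) := by
  refine ⟨rfl, fun l' hl' => ?_⟩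
  have := h.2 (t :: l') (by rw [wordPerm_cons, wordPerm_cons, hl'])
  simpa using this

/-- After clearing denominators, `∂_{j_1} ∘ ⋯ ∘ ∂_{j_k}` is a combination of permutation
operators, which is triangular for the length; the leading coefficient is nonzero if the word is
reduced. -/
lemma exists_ddWord_expansion {F : Type} [Field F] {m : ℕ}
    {dd : (t : Fin (m - 1)) → MvPolynomial (Fin m) F → MvPolynomial (Fin m) F}
    (hdd : IsDividedDiff dd) (l : List (Fin (m - 1))) :
    ∃ (D : MvPolynomial (Fin m) F) (c : Equiv.Perm (Fin m) → MvPolynomial (Fin m) F),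
      D ≠ 0 ∧ (∀ f, D * ddWord dd l f = ∑ v, c v * rename v f) ∧
      (∀ v, c v ≠ 0 → v ≠ wordPerm l → ∃ l', wordPerm l' = v ∧ l'.length < l.length) ∧
      (IsReducedWord l (wordPerm l) → c (wordPerm l) ≠ 0) := by
  induction l with
  | nil =>
    refine ⟨1, Pi.single 1 1, one_ne_zero, fun f => ?_, fun v hv hne => ?_, fun _ => ?_⟩
    · rw [Finset.sum_eq_single 1]
      · simp [ddWord]
      · intro v _ hv
        simp [Pi.single_eq_of_ne hv]
      · simp
    · exact absurd (Pi.single_eq_of_ne hne _) hv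
    · have h : wordPerm ([] : List (Fin (m - 1))) = 1 := rfl
      rw [h, Pi.single_eq_same]
      exact one_ne_zero
  | cons t l ih =>
    obtain ⟨D, c, hD, hexp, hsupp, hlead⟩ := ih
    have hinj : Function.Injective
        (rename (swapAt t) : MvPolynomial (Fin m) F → MvPolynomial (Fin m) F) :=
      rename_injective _ (swapAt t).injective
    have hrD : rename (swapAt t) D ≠ 0 := fun h => hD (hinj (by rw [h, map_zero]))
    refine ⟨D * rename (swapAt t) D * (X (castL t) - X (castR t)),
      fun v => D * rename (swapAt t) (c (swapAt t * v)) - rename (swapAt t) D * c v,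
      mul_ne_zero (mul_ne_zero hD hrD) (X_castL_sub_X_castR_ne_zero F t), fun f => ?_,
      fun v hv hne => ?_, fun hl => ?_⟩
    · have hsum : ∑ v, rename (swapAt t) (c (swapAt t * v)) * rename v f =
          rename (swapAt t) (D * ddWord dd l f) := by
        rw [hexp, map_sum, ← Equiv.sum_comp (Equiv.mulLeft (swapAt t))]
        refine Finset.sum_congr rfl fun v _ => ?_
        rw [Equiv.coe_mulLeft, swapAt_mul_swapAt_mul, map_mul, rename_rename, Equiv.Perm.coe_mul]
      calc D * rename (swapAt t) D * (X (castL t) - X (castR t)) * ddWord dd (t :: l) f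
          = D * rename (swapAt t) D *
              (dd t (ddWord dd l f) * (X (castL t) - X (castR t))) := by
            rw [ddWord]; ring
        _ = D * rename (swapAt t) (D * ddWord dd l f) -
              rename (swapAt t) D * (D * ddWord dd l f) := by
            rw [hdd, map_mul]; ring
        _ = _ := by
            rw [← hsum, hexp, Finset.mul_sum, Finset.mul_sum, ← Finset.sum_sub_distrib]
            exact Finset.sum_congr rfl fun v _ => by ring
    · by_cases hcv : c v = 0
      · have hctv : c (swapAt t * v) ≠ 0 := fun h => hv (by simp [h, hcv])
        have hne' : swapAt t * v ≠ wordPerm l := fun h =>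
          hne (by rw [wordPerm_cons, ← h, swapAt_mul_swapAt_mul])
        obtain ⟨l', hl', hlen⟩ := hsupp _ hctv hne'
        exact ⟨t :: l', by rw [wordPerm_cons, hl', swapAt_mul_swapAt_mul], by simpa using hlen⟩
      · by_cases hvl : v = wordPerm l
        · exact ⟨l, hvl.symm, by simp⟩
        · obtain ⟨l', hl', hlen⟩ := hsupp v hcv hvl
          exact ⟨l', hl', hlen.trans (by simp)⟩
    · have hzero : c (wordPerm (t :: l)) = 0 := by
        by_contra hc
        by_cases hvl : wordPerm (t :: l) = wordPerm l
        · simpa using hl.2 l hvl.symm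
        · obtain ⟨l', hl', hlen⟩ := hsupp _ hc hvl
          have := hl.2 l' hl'
          simp only [List.length_cons] at this
          omega
      beta_reduce
      rw [hzero, mul_zero, sub_zero, wordPerm_cons, swapAt_mul_swapAt_mul]
      exact mul_ne_zero hD fun h => hlead hl.tail (hinj (by rw [h, map_zero]))

/-- Permutation operators are linearly independent over the polynomial ring. -/
lemma eq_zero_of_sum_mul_rename_eq_zero {F : Type} [Field F] {m : ℕ}
    {a : Equiv.Perm (Fin m) → MvPolynomial (Fin m) F}
    (h : ∀ f, ∑ v, a v * rename v f = 0) (v : Equiv.Perm (Fin m)) : a v = 0 := by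
  let φ : Equiv.Perm (Fin m) → (MvPolynomial (Fin m) F →* MvPolynomial (Fin m) F) :=
    fun v => (rename v : MvPolynomial (Fin m) F →ₐ[F] MvPolynomial (Fin m) F)
  have hφ : Function.Injective φ := fun v w hvw => by
    ext i
    have := DFunLike.congr_fun hvw (X i : MvPolynomial (Fin m) F)
    simp only [φ, MonoidHom.coe_coe, rename_X] at this
    rw [X_injective this]
  have hli := (linearIndependent_monoidHom (MvPolynomial (Fin m) F)
    (MvPolynomial (Fin m) F)).comp φ hφ
  refine Fintype.linearIndependent_iff.1 hli a (funext fun f => ?_) v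
  simpa [φ] using h f

end DD

open DD in
/-- For each `w ∈ S_m` fix a reduced expression and let `∂_w` be the corresponding
composite of divided difference operators.  Then the family of `F`-linear endomorphisms
`{∂_w ∘ μ_{x^𝐭} : w ∈ S_m, 𝐭 ∈ ℤ_{≥0}^m}` of `F[x_1,…,x_m]` is linearly independent over `F`,
where `μ_{x^𝐭}` is multiplication by the monomial `x_1^{t_1}⋯x_m^{t_m}`. -/
theorem stmt_18 (F : Type) [Field F] (m : ℕ)
    (dd : (t : Fin (m - 1)) → MvPolynomial (Fin m) F → MvPolynomial (Fin m) F)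
    (hdd : IsDividedDiff dd)
    (red : Equiv.Perm (Fin m) → List (Fin (m - 1)))
    (hred : ∀ w, IsReducedWord (red w) w) :
    LinearIndependent F
      (fun p : Equiv.Perm (Fin m) × (Fin m → ℕ) =>
        (fun f => ddWord dd (red p.1)
            (monomial (Finsupp.equivFunOnFinite.symm p.2) (1 : F) * f) :
          MvPolynomial (Fin m) F → MvPolynomial (Fin m) F)) := by
  classical
  choose D c hD hexp hsupp hlead using fun w => exists_ddWord_expansion hdd (red w)
  rw [linearIndependent_iff']
  intro s g hg
  let p : Equiv.Perm (Fin m) → MvPolynomial (Fin m) F := fun w =>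
    ∑ i ∈ s, if i.1 = w then monomial (Finsupp.equivFunOnFinite.symm i.2) (g i) else 0
  -- bring all expansions to a common denominator
  let E : Equiv.Perm (Fin m) → MvPolynomial (Fin m) F := fun w =>
    ∏ w' ∈ Finset.univ.erase w, D w'
  have hE : ∀ w, E w ≠ 0 := fun w => Finset.prod_ne_zero_iff.2 fun w' _ => hD w'
  have hED : ∀ w, E w * D w = ∏ w', D w' := fun w =>
    Finset.prod_erase_mul _ _ (Finset.mem_univ w)
  have hcoef : ∀ v, ∑ w, E w * c w v * rename v (p w) = 0 := by
    refine eq_zero_of_sum_mul_rename_eq_zero fun f => ?_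
    have hgf : ∑ i ∈ s, C (g i) * ddWord dd (red i.1)
        (monomial (Finsupp.equivFunOnFinite.symm i.2) (1 : F) * f) = 0 := by
      simpa [Finset.sum_apply, smul_eq_C_mul] using congrFun hg f
    have hp : ∀ v, ∑ w, E w * c w v * rename v (p w) = ∑ i ∈ s, E i.1 * c i.1 v *
        rename v (monomial (Finsupp.equivFunOnFinite.symm i.2) (g i)) := fun v => by
      simp only [p, map_sum, Finset.mul_sum]
      rw [Finset.sum_comm]
      refine Finset.sum_congr rfl fun i _ => ?_
      rw [Finset.sum_eq_single i.1]
      · rw [if_pos rfl]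
      · intro w _ hw
        rw [if_neg hw.symm, map_zero, mul_zero]
      · simp
    rw [← mul_zero (∏ w', D w'), ← hgf, Finset.mul_sum]
    simp only [hp, Finset.sum_mul]
    rw [Finset.sum_comm]
    refine Finset.sum_congr rfl fun i _ => ?_
    have hmon : (monomial (Finsupp.equivFunOnFinite.symm i.2) (g i) : MvPolynomial (Fin m) F) =
        C (g i) * monomial (Finsupp.equivFunOnFinite.symm i.2) 1 := by
      rw [C_mul_monomial, mul_one]
    rw [← hED i.1, mul_left_comm, mul_assoc (E i.1), hexp, Finset.mul_sum, Finset.mul_sum]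
    refine Finset.sum_congr rfl fun v _ => ?_
    rw [hmon, map_mul, map_mul, rename_C]
    ring
  have hp0 : ∀ w, p w = 0 := by
    by_contra! hne
    obtain ⟨w, hw, hmax⟩ := Finset.exists_max_image (Finset.univ.filter fun w => p w ≠ 0)
      (fun w => (red w).length) (by simpa [Finset.filter_nonempty_iff] using hne)
    have hpw : p w ≠ 0 := by simpa using hw
    have hw0 := hcoef w
    rw [Finset.sum_eq_single w] at hw0
    · have hcw : c w w ≠ 0 := by
        have := hlead w
        rw [(hred w).1] at this
        exact this (hred w)
      refine mul_ne_zero (mul_ne_zero (hE w) hcw) (fun h => hpw ?_) hw0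
      exact rename_injective _ w.injective (by rw [h, map_zero])
    · intro w' _ hw'
      by_cases hpw' : p w' = 0
      · rw [hpw', map_zero, mul_zero]
      · have hc : c w' w = 0 := by
          by_contra hc
          obtain ⟨l', hl', hlen⟩ := hsupp w' w hc (by rw [(hred w').1]; exact hw'.symm)
          have h₁ := (hred w).2 l' hl'
          have h₂ := hmax w' (by simpa using hpw')
          omega
        rw [hc, mul_zero, zero_mul]
    · simp
  intro i hi
  have hcoeff := congrArg (coeff (Finsupp.equivFunOnFinite.symm i.2)) (hp0 i.1)
  rw [coeff_zero, coeff_sum, Finset.sum_eq_single i] at hcoeff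
  · simpa using hcoeff
  · intro j _ hj
    split_ifs with h
    · rw [coeff_monomial, if_neg]
      exact fun h' => hj (Prod.ext h (Finsupp.equivFunOnFinite.symm.injective h'))
    · rfl
  · exact fun h => absurd hi h
end
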